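/- arXiv:2605.26049 — 6 statements merged into one kernel-verified Lean document; each statement's English description precedes it below -/
import Mathlib

section
/- Let m, n ≥ 1. Let Θ be a nondegenerate real skew-symmetric m×m matrix, let Ψ' be a real skew-symmetric n×n matrix, let M be an n×m integer matrix, and let K be an m×m integer matrix with Kᵀ = −K. Assume Θ = Mᵀ Ψ' M + K (an identity of real matrices, with M and K regarded as real matrices). Then the only integer vector x ∈ ℤ^m with M x = 0 is x = 0 (i.e. x ↦ M x is injective on integer vectors), and consequently m ≤ n. -/
open Matrix

section

variable {m n R S : Type*} [Fintype m] [Fintype n]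

/-- Nondegeneracy modulo `R` of the pairing `(x, y) ↦ xᵀ Θ y` on `R`-vectors, viewed over `S`
along `f : R →+* S`: an `x` pairing into the image of `R` with every `y` is zero. The inclusion
`ℤ → ℝ` gives the notion of a nondegenerate real matrix. -/
def IsNondegenerateModRange [Ring R] [Ring S] (f : R →+* S) (Θ : Matrix m m S) : Prop :=
  ∀ x : m → R, (∀ y : m → R, (f ∘ x) ⬝ᵥ Θ *ᵥ (f ∘ y) ∈ f.range) → x = 0

theorem dotProduct_map_mulVec_mem_range [Ring R] [Ring S] (f : R →+* S)
    (K : Matrix m n R) (x : m → R) (y : n → R) :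
    (f ∘ x) ⬝ᵥ K.map f *ᵥ (f ∘ y) ∈ f.range := by
  have map_mulVec : K.map f *ᵥ (f ∘ y) = f ∘ (K *ᵥ y) :=
    funext fun i => (f.map_mulVec K y i).symm
  exact ⟨x ⬝ᵥ K *ᵥ y, by rw [f.map_dotProduct, map_mulVec]⟩

variable [CommRing R]

theorem dotProduct_map_transpose_mul_mulVec {p : Type*} [Fintype p] [Ring S] (f : R →+* S)
    (M : Matrix n m R) (X : Matrix n p S) (x : m → R) (v : p → S) :
    (f ∘ x) ⬝ᵥ ((M.map f)ᵀ * X) *ᵥ v = (f ∘ (M *ᵥ x)) ⬝ᵥ X *ᵥ v := by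
  have vecMul_map : (f ∘ x) ᵥ* (M.map f)ᵀ = f ∘ (M *ᵥ x) := by
    rw [← vecMul_transpose]
    exact funext fun i => (f.map_vecMul Mᵀ x i).symm
  rw [← mulVec_mulVec, dotProduct_mulVec, vecMul_map]

/-- Since `xᵀ Mᵀ X y = (M x)ᵀ X y`, on the kernel of `M` the pairing by `Mᵀ X + K` reduces to that
by `K`, which has values in `R`. -/
theorem IsNondegenerateModRange.eq_zero_of_mulVec_eq_zero [Ring S] {f : R →+* S}
    {M : Matrix n m R} {X : Matrix n m S} {K : Matrix m m R}
    (hnd : IsNondegenerateModRange f ((M.map f)ᵀ * X + K.map f))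
    {x : m → R} (hx : M *ᵥ x = 0) : x = 0 := by
  refine hnd x fun y => ?_
  have vanish : (f ∘ x) ⬝ᵥ ((M.map f)ᵀ * X) *ᵥ (f ∘ y) = 0 := by
    rw [dotProduct_map_transpose_mul_mulVec, hx, Pi.comp_zero, map_zero, Function.const_zero,
      zero_dotProduct]
  rw [add_mulVec, dotProduct_add, vanish, zero_add]
  exact dotProduct_map_mulVec_mem_range f K x y

theorem card_le_card_of_mulVec_eq_zero_imp [Nontrivial R] {M : Matrix n m R}
    (hM : ∀ x : m → R, M *ᵥ x = 0 → x = 0) : Fintype.card m ≤ Fintype.card n :=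
  card_le_of_injective R M.mulVecLin ((injective_iff_map_eq_zero M.mulVecLin).2 hM)

theorem stmt_0_general [Nontrivial R] [Ring S] (f : R →+* S) (Θ : Matrix m m S)
    (hΘnd : IsNondegenerateModRange f Θ) (M : Matrix n m R) (X : Matrix n m S)
    (K : Matrix m m R) (hEq : Θ = (M.map f)ᵀ * X + K.map f) :
    (∀ x : m → R, M *ᵥ x = 0 → x = 0) ∧ Fintype.card m ≤ Fintype.card n := by
  subst hEq
  have ker_eq_zero (x : m → R) (hx : M *ᵥ x = 0) : x = 0 := hΘnd.eq_zero_of_mulVec_eq_zero hx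
  exact ⟨ker_eq_zero, card_le_card_of_mulVec_eq_zero_imp ker_eq_zero⟩

end

/-- If `Θ` is a nondegenerate real skew-symmetric `m × m` matrix,
`Ψ'` a real skew-symmetric `n × n` matrix, `M` an `n × m` integer matrix, `K` an
integer skew-symmetric `m × m` matrix, and `Θ = Mᵀ Ψ' M + K` (over ℝ), then
`x ↦ M x` is injective on integer vectors and consequently `m ≤ n`. -/
theorem stmt_0 (m n : ℕ) (hm : 1 ≤ m) (hn : 1 ≤ n)
    (Θ : Matrix (Fin m) (Fin m) ℝ) (hΘskew : Θᵀ = -Θ)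
    (hΘnd : ∀ x : Fin m → ℤ,
      (∀ y : Fin m → ℤ, ∃ k : ℤ,
        (fun i => (x i : ℝ)) ⬝ᵥ Θ.mulVec (fun i => (y i : ℝ)) = (k : ℝ)) → x = 0)
    (Ψ' : Matrix (Fin n) (Fin n) ℝ) (hΨskew : Ψ'ᵀ = -Ψ')
    (M : Matrix (Fin n) (Fin m) ℤ) (K : Matrix (Fin m) (Fin m) ℤ) (hK : Kᵀ = -K)
    (hEq : Θ = (M.map (Int.cast : ℤ → ℝ))ᵀ * Ψ' * M.map (Int.cast : ℤ → ℝ)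
        + K.map (Int.cast : ℤ → ℝ)) :
    (∀ x : Fin m → ℤ, M.mulVec x = 0 → x = 0) ∧ m ≤ n := by
  have nondegenerate : IsNondegenerateModRange (Int.castRingHom ℝ) Θ := fun x hx =>
    hΘnd x fun y => (hx y).imp fun _ => Eq.symm
  have decomposition : Θ = (M.map (Int.castRingHom ℝ))ᵀ * (Ψ' * M.map (Int.castRingHom ℝ))
      + K.map (Int.castRingHom ℝ) := by
    rw [← Matrix.mul_assoc]
    exact hEq
  simpa only [Fintype.card_fin] using stmt_0_general _ Θ nondegenerate M _ K decomposition
end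

section
/- Let N ≥ 2 be an integer. Every additive group automorphism α of ℤ × ℤ[1/N] has the form α(a, q) = (ε·a, v·a + u·q) for some ε ∈ {1, −1}, some v ∈ ℤ[1/N], and some unit u of ℤ[1/N] (all products computed in ℚ). -/
/-!
A nonzero homomorphism from a subgroup `H` of `ℚ` to `ℤ` is injective, so it exists only if `H` is
cyclic, which `ℤ[1/N]` is not because one can divide by `N` in it. Hence every automorphism of
`ℤ × H` is lower triangular, and its diagonal entries are automorphisms of `ℤ` and of `H`. The
former are `± 1`; the latter are multiplications by a rational number, because any two nonzero
elements of `H` have a common nonzero integer multiple.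
-/

section LowerTriangular

variable {A B C D : Type*} [AddZeroClass A] [AddZeroClass B] [AddZeroClass C] [AddZeroClass D]

theorem map_zero_mk_of_subsingleton [Subsingleton (B →+ C)] (f : A × B →+ C × D) (b : B) :
    f (0, b) = (0, (f (0, b)).2) :=
  have fst_comp_inr : ((AddMonoidHom.fst C D).comp f).comp (AddMonoidHom.inr A B) = 0 :=
    Subsingleton.elim _ _
  Prod.ext (DFunLike.congr_fun fst_comp_inr b) rfl

theorem map_mk_of_subsingleton [Subsingleton (B →+ C)] (f : A × B →+ C × D) (a : A) (b : B) :
    f (a, b) = ((f (a, 0)).1, (f (a, 0)).2 + (f (0, b)).2) := by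
  rw [← Prod.fst_add_snd (a, b), map_add, map_zero_mk_of_subsingleton f b]
  exact Prod.ext (add_zero _) rfl

theorem fst_map_fst_map_of_leftInverse [Subsingleton (D →+ A)] {f : A × B →+ C × D}
    {g : C × D →+ A × B} (hgf : Function.LeftInverse g f) (a : A) :
    (g ((f (a, 0)).1, 0)).1 = a :=
  calc (g ((f (a, 0)).1, 0)).1 = (g (f (a, 0))).1 :=
        (congrArg Prod.fst (map_mk_of_subsingleton g _ _)).symm
    _ = a := by rw [hgf]

theorem snd_map_snd_map_of_leftInverse [Subsingleton (B →+ C)] {f : A × B →+ C × D}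
    {g : C × D →+ A × B} (hgf : Function.LeftInverse g f) (b : B) :
    (g (0, (f (0, b)).2)).2 = b := by
  rw [← map_zero_mk_of_subsingleton f b, hgf]

theorem exists_addEquiv_prod_eq_lowerTriangular [Subsingleton (B →+ C)] [Subsingleton (D →+ A)]
    (α : A × B ≃+ C × D) :
    ∃ (β : A ≃+ C) (γ : A →+ D) (δ : B ≃+ D), ∀ a b, α (a, b) = (β a, γ a + δ b) := by
  let f : A × B →+ C × D := α
  let g : C × D →+ A × B := α.symm
  have hgf : Function.LeftInverse g f := α.symm_apply_apply
  have hfg : Function.LeftInverse f g := α.apply_symm_apply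
  let β : A ≃+ C := AddMonoidHom.toAddEquiv
    (((AddMonoidHom.fst C D).comp f).comp (AddMonoidHom.inl A B))
    (((AddMonoidHom.fst A B).comp g).comp (AddMonoidHom.inl C D))
    (AddMonoidHom.ext (fst_map_fst_map_of_leftInverse hgf))
    (AddMonoidHom.ext (fst_map_fst_map_of_leftInverse hfg))
  let δ : B ≃+ D := AddMonoidHom.toAddEquiv
    (((AddMonoidHom.snd C D).comp f).comp (AddMonoidHom.inr A B))
    (((AddMonoidHom.snd A B).comp g).comp (AddMonoidHom.inr C D))
    (AddMonoidHom.ext (snd_map_snd_map_of_leftInverse hgf))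
    (AddMonoidHom.ext (snd_map_snd_map_of_leftInverse hfg))
  exact ⟨β, ((AddMonoidHom.snd C D).comp f).comp (AddMonoidHom.inl A B), δ,
    map_mk_of_subsingleton f⟩

end LowerTriangular

theorem exists_int_addEquiv_apply_eq_mul (β : ℤ ≃+ ℤ) :
    ∃ ε : ℤ, (ε = 1 ∨ ε = -1) ∧ ∀ a, β a = ε * a := by
  rcases Int.addEquiv_eq_refl_or_neg β with rfl | rfl
  · exact ⟨1, .inl rfl, fun a ↦ (one_mul a).symm⟩
  · exact ⟨-1, .inr rfl, fun a ↦ (neg_one_mul a).symm⟩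

section RatSubgroup

variable {H : AddSubgroup ℚ}

theorem coe_smul_map_comm {M : Type*} [AddCommGroup M] [Module ℚ M] (f : H →+ M) (x y : H) :
    (x : ℚ) • f y = (y : ℚ) • f x := by
  let p : ℚ := x
  let q : ℚ := y
  have common_multiple : (p.num * q.den) • y = (q.num * p.den) • x := by
    ext
    push_cast [zsmul_eq_mul]
    rw [← Rat.mul_den_eq_num, ← Rat.mul_den_eq_num]
    ring
  have map_common_multiple :
      ((p.num * q.den : ℤ) : ℚ) • f y = ((q.num * p.den : ℤ) : ℚ) • f x := by
    rw [Int.cast_smul_eq_zsmul, Int.cast_smul_eq_zsmul, ← map_zsmul, common_multiple, map_zsmul]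
  have den_mul_den_ne_zero : (p.den * q.den : ℚ) ≠ 0 := by positivity
  apply smul_right_injective M den_mul_den_ne_zero
  push_cast [← Rat.mul_den_eq_num] at map_common_multiple
  simp only [smul_smul]
  convert map_common_multiple using 2 <;> ring

theorem subsingleton_addMonoidHom_int_of_not_isAddCyclic (hH : ¬ IsAddCyclic H) :
    Subsingleton (H →+ ℤ) := by
  refine subsingleton_of_forall_eq 0 fun f ↦ ?_
  by_contra f_ne_zero
  obtain ⟨y, fy_ne_zero⟩ := DFunLike.ne_iff.mp f_ne_zero
  refine hH (isAddCyclic_of_injective f ((injective_iff_map_eq_zero f).mpr fun x fx_eq_zero ↦ ?_))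
  have x_mul_fy : (x : ℚ) * f y = y * f x :=
    coe_smul_map_comm ((Int.castAddHom ℚ).comp f) x y
  rw [fx_eq_zero, Int.cast_zero, mul_zero] at x_mul_fy
  exact Subtype.ext ((mul_eq_zero.mp x_mul_fy).resolve_right (Int.cast_ne_zero.mpr fy_ne_zero))

theorem not_isAddCyclic_of_div_mem (hH : H ≠ ⊥) {n : ℕ} (hn : 2 ≤ n)
    (div_mem : ∀ q ∈ H, q / n ∈ H) : ¬ IsAddCyclic H := by
  rw [AddSubgroup.isAddCyclic_iff_exists_zmultiples_eq_top]
  rintro ⟨g, rfl⟩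
  have g_ne_zero : g ≠ 0 := by simpa using hH
  obtain ⟨k, hk : k • g = g / n⟩ := div_mem g (AddSubgroup.mem_zmultiples g)
  have k_mul_n : k * n = 1 := by
    rw [zsmul_eq_mul] at hk
    field_simp at hk
    exact_mod_cast hk
  have n_eq_one : n = 1 := by
    simpa using Int.isUnit_iff_natAbs_eq.mp (.of_mul_eq_one_right k k_mul_n)
  omega

theorem not_isAddCyclic_of_mem_iff_eq_div_pow {N : ℕ} (hN : 2 ≤ N)
    (hH : ∀ q : ℚ, q ∈ H ↔ ∃ a : ℤ, ∃ k : ℕ, q = (a : ℚ) / (N : ℚ) ^ k) : ¬ IsAddCyclic H := by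
  have one_mem : (1 : ℚ) ∈ H := (hH 1).mpr ⟨1, 0, by simp⟩
  have H_ne_bot : H ≠ ⊥ := fun H_eq_bot ↦ by simp [H_eq_bot] at one_mem
  refine not_isAddCyclic_of_div_mem H_ne_bot hN fun q hq ↦ ?_
  obtain ⟨a, k, rfl⟩ := (hH q).mp hq
  exact (hH _).mpr ⟨a, k + 1, by rw [pow_succ, div_div]⟩

theorem exists_addEquiv_apply_eq_unit_mul (one_mem : (1 : ℚ) ∈ H) (δ : H ≃+ H) :
    ∃ u ∈ H, (∃ u' ∈ H, u * u' = 1) ∧ ∀ q : H, (δ q : ℚ) = u * q := by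
  let one : H := ⟨1, one_mem⟩
  have δ_apply (q : H) : (δ q : ℚ) = δ one * q := by
    simpa [one, mul_comm] using coe_smul_map_comm (H.subtype.comp (δ : H →+ H)) one q
  have δ_one_mul : (δ one : ℚ) * δ.symm one = 1 := by
    rw [← δ_apply, δ.apply_symm_apply]
  exact ⟨δ one, SetLike.coe_mem _, ⟨δ.symm one, SetLike.coe_mem _, δ_one_mul⟩, δ_apply⟩

end RatSubgroup

theorem stmt_3_general {H : AddSubgroup ℚ} (one_mem : (1 : ℚ) ∈ H) (hH : ¬ IsAddCyclic H)
    (α : (ℤ × H) ≃+ (ℤ × H)) :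
    ∃ ε : ℤ, (ε = 1 ∨ ε = -1) ∧ ∃ v ∈ H, ∃ u ∈ H,
      (∃ u' ∈ H, u * u' = 1) ∧
      ∀ (a : ℤ) (q : H),
        (α (a, q)).1 = ε * a ∧ ((α (a, q)).2 : ℚ) = v * (a : ℚ) + u * (q : ℚ) := by
  have := subsingleton_addMonoidHom_int_of_not_isAddCyclic hH
  obtain ⟨β, γ, δ, α_apply⟩ := exists_addEquiv_prod_eq_lowerTriangular α
  obtain ⟨ε, hε, β_apply⟩ := exists_int_addEquiv_apply_eq_mul β
  obtain ⟨u, hu, u_unit, δ_apply⟩ := exists_addEquiv_apply_eq_unit_mul one_mem δ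
  have γ_apply (a : ℤ) : (γ a : ℚ) = γ 1 * a := by
    rw [AddMonoidHom.apply_int, AddSubgroup.coe_zsmul, zsmul_eq_mul, mul_comm]
  refine ⟨ε, hε, γ 1, SetLike.coe_mem _, u, hu, u_unit, fun a q ↦ ?_⟩
  rw [α_apply, AddSubgroup.coe_add, β_apply, γ_apply, δ_apply]
  exact ⟨rfl, rfl⟩

/-- For `N ≥ 2`, every additive group automorphism `α` of
`ℤ × ℤ[1/N]` has the form `α (a, q) = (ε·a, v·a + u·q)` with `ε ∈ {1, -1}`,
`v ∈ ℤ[1/N]`, and `u` a unit of `ℤ[1/N]` (products computed in `ℚ`). -/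
theorem stmt_3 (N : ℕ) (hN : 2 ≤ N) (H : AddSubgroup ℚ)
    (hH : ∀ q : ℚ, q ∈ H ↔ ∃ a : ℤ, ∃ k : ℕ, q = (a : ℚ) / (N : ℚ) ^ k)
    (α : (ℤ × H) ≃+ (ℤ × H)) :
    ∃ ε : ℤ, (ε = 1 ∨ ε = -1) ∧ ∃ v ∈ H, ∃ u ∈ H,
      (∃ u' ∈ H, u * u' = 1) ∧
      ∀ (a : ℤ) (q : H),
        (α (a, q)).1 = ε * a ∧ ((α (a, q)).2 : ℚ) = v * (a : ℚ) + u * (q : ℚ) := by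
  exact stmt_3_general ((hH 1).mpr ⟨1, 0, by simp⟩)
    (not_isAddCyclic_of_mem_iff_eq_div_pow hN hH) α
end

section
/- Let N ≥ 2 be an integer and let θ, θ' be irrational real numbers. Suppose α is an additive group automorphism of ℤ × ℤ[1/N] such that α(1, 0) = (1, 0) and such that for every (a, q) ∈ ℤ × ℤ[1/N], writing α(a, q) = (a', q'), one has a' + θ'·q' = a + θ·q as real numbers (rationals coerced to ℝ). Then there exists a unit u of ℤ[1/N] with θ = u·θ'. -/
/-!
Every homomorphism `ℤ[1/N] →+ ℤ` kills `1`, because its value there is divisible by all powers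
of `N`. Hence an additive map of `ℤ × ℤ[1/N]` sends `(0, 1)` to some `(0, u)`, and comparing traces
gives `θ = u * θ'`. The inverse map gives `θ' = u' * θ` in the same way, so `u * u' = 1` unless
`θ' = 0`; in that case `θ = 0` as well and `u = 1` will do.
-/

theorem map_eq_zero_of_forall_exists_pow_nsmul_eq {A : Type*} [AddMonoid A] {n : ℕ} (hn : 2 ≤ n)
    {x : A} (hx : ∀ k : ℕ, ∃ y : A, n ^ k • y = x) (f : A →+ ℤ) : f x = 0 := by
  have pow_dvd (k : ℕ) : (n : ℤ) ^ k ∣ f x := by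
    obtain ⟨y, rfl⟩ := hx k
    simp [map_nsmul]
  by_contra hne
  have hfin : FiniteMultiplicity (n : ℤ) (f x) :=
    Int.finiteMultiplicity_iff.2 ⟨by rw [Int.natAbs_natCast]; lia, hne⟩
  exact hfin.not_pow_dvd_of_multiplicity_lt (Nat.lt_succ_self _) (pow_dvd _)

theorem map_one_eq_zero_of_forall_inv_pow_mem {H : AddSubgroup ℚ} (one_mem : (1 : ℚ) ∈ H) {n : ℕ}
    (hn : 2 ≤ n) (inv_pow_mem : ∀ k : ℕ, ((n : ℚ) ^ k)⁻¹ ∈ H) (f : H →+ ℤ) :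
    f ⟨1, one_mem⟩ = 0 := by
  refine map_eq_zero_of_forall_exists_pow_nsmul_eq hn (fun k ↦ ⟨⟨_, inv_pow_mem k⟩, ?_⟩) f
  have hpow : (n : ℚ) ^ k ≠ 0 := pow_ne_zero k (by positivity)
  ext
  simp [hpow]

section Trace

variable {K : Type*} [DivisionRing K] {H H' : AddSubgroup ℚ} {θ θ' : K}

/-- The trace pairing `(a, q) ↦ a + θ q` on `ℤ × H`, with values in a division ring containing
`θ`. -/
def tracePairing (θ : K) (x : ℤ × H) : K :=
  (x.1 : K) + θ * ((x.2 : ℚ) : K)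

theorem exists_mem_eq_mul_of_tracePairing_eq (one_mem : (1 : ℚ) ∈ H)
    (map_one_eq_zero : ∀ f : H →+ ℤ, f ⟨1, one_mem⟩ = 0) (β : (ℤ × H) →+ (ℤ × H'))
    (hβ : ∀ x, tracePairing θ' (β x) = tracePairing θ x) :
    ∃ u ∈ H', θ = (u : K) * θ' := by
  let e : ℤ × H := (0, ⟨1, one_mem⟩)
  have fst_eq_zero : (β e).1 = 0 :=
    map_one_eq_zero ((AddMonoidHom.fst ℤ H').comp (β.comp (AddMonoidHom.inr ℤ H)))
  have trace_eq : θ' * ((β e).2 : ℚ) = θ := by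
    simpa [tracePairing, fst_eq_zero, e] using hβ e
  exact ⟨(β e).2, (β e).2.2, by rw [Rat.cast_comm, trace_eq]⟩

theorem stmt_5_general [CharZero K] (one_mem : (1 : ℚ) ∈ H) (one_mem' : (1 : ℚ) ∈ H')
    (map_one_eq_zero : ∀ f : H →+ ℤ, f ⟨1, one_mem⟩ = 0)
    (map_one_eq_zero' : ∀ f : H' →+ ℤ, f ⟨1, one_mem'⟩ = 0)
    (α : (ℤ × H) ≃+ (ℤ × H')) (hα : ∀ x, tracePairing θ' (α x) = tracePairing θ x) :
    ∃ u ∈ H', (∃ u' ∈ H, u * u' = 1) ∧ θ = (u : K) * θ' := by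
  have hα_symm (y : ℤ × H') : tracePairing θ (α.symm y) = tracePairing θ' y := by
    rw [← hα, α.apply_symm_apply]
  obtain ⟨u, hu, hθ⟩ :=
    exists_mem_eq_mul_of_tracePairing_eq one_mem map_one_eq_zero α.toAddMonoidHom hα
  obtain ⟨u', hu', hθ'⟩ :=
    exists_mem_eq_mul_of_tracePairing_eq one_mem' map_one_eq_zero' α.symm.toAddMonoidHom hα_symm
  rcases eq_or_ne θ' 0 with rfl | hne
  · exact ⟨1, one_mem', ⟨1, one_mem, one_mul 1⟩, by simpa using hθ⟩
  · have mul_eq_one : (u' : K) * u = 1 := by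
      apply mul_right_cancel₀ hne
      rw [mul_assoc, ← hθ, ← hθ', one_mul]
    exact ⟨u, hu, ⟨u', hu', by rw [mul_comm]; exact_mod_cast mul_eq_one⟩, hθ⟩

end Trace

/-- For `N ≥ 2` and irrational `θ, θ'`, if an additive automorphism
`α` of `ℤ × ℤ[1/N]` fixes `(1,0)` and intertwines the trace pairings
`(a, q) ↦ a + θ·q` and `(a', q') ↦ a' + θ'·q'`, then `θ = u·θ'` for some unit
`u` of `ℤ[1/N]`. -/
theorem stmt_5 (N : ℕ) (hN : 2 ≤ N) (θ θ' : ℝ)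
    (hθ : Irrational θ) (hθ' : Irrational θ')
    (H : AddSubgroup ℚ)
    (hH : ∀ q : ℚ, q ∈ H ↔ ∃ a : ℤ, ∃ k : ℕ, q = (a : ℚ) / (N : ℚ) ^ k)
    (α : (ℤ × H) ≃+ (ℤ × H)) (hα1 : α (1, 0) = (1, 0))
    (htrace : ∀ (a : ℤ) (q : H),
      ((α (a, q)).1 : ℝ) + θ' * (((α (a, q)).2 : ℚ) : ℝ)
        = (a : ℝ) + θ * ((q : ℚ) : ℝ)) :
    ∃ u ∈ H, (∃ u' ∈ H, u * u' = 1) ∧ θ = (u : ℝ) * θ' := by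
  have one_mem : (1 : ℚ) ∈ H := (hH 1).2 ⟨1, 0, by simp⟩
  have inv_pow_mem (k : ℕ) : ((N : ℚ) ^ k)⁻¹ ∈ H := (hH _).2 ⟨1, k, by simp⟩
  have map_one_eq_zero := map_one_eq_zero_of_forall_inv_pow_mem one_mem hN inv_pow_mem
  exact stmt_5_general one_mem one_mem map_one_eq_zero map_one_eq_zero α fun x ↦ htrace x.1 x.2
end

section
/- Let N ≥ 2 be an integer. For n ∈ ℕ set s_n = Σ_{k=1}^{n} N^{−k} ∈ ℚ (with s_0 = 0), define F_n : ℤ² → ℤ × ℚ by F_n(a, b) = (a, b/N^n + a·s_n), and let D_N : ℤ² → ℤ² be D_N(a, b) = (a, −a + N·b). Then: (i) F_{n+1}(D_N(a, b)) = F_n(a, b) for every n ∈ ℕ and every (a, b) ∈ ℤ²; (ii) each F_n is injective; (iii) for every m ∈ ℤ and every q ∈ ℤ[1/N] there exist n ∈ ℕ and (a, b) ∈ ℤ² with F_n(a, b) = (m, q). (Thus the maps F_n identify the direct limit of the system (ℤ², D_N) with ℤ × ℤ[1/N], the K₀-computation for the same-dimensional noncorner protorus A_pro^{N,θ₀}.)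 -/
/-!
Over the common denominator `N ^ n`, the second coordinate of `F_n (a, b)` is
`(b + a * t_n) / N ^ n` with `t_n = 1 + N + ⋯ + N ^ (n - 1)`. So `F_n` is the shear
`(a, b) ↦ (a, b + a * t_n)` of `ℤ²` followed by division of the second coordinate by `N ^ n`.
The shear is bijective, whence injectivity and the description of the image, and compatibility
with `D_N` is the recursion `t_(n+1) = N * t_n + 1`.
-/

theorem sum_one_div_pow_succ {K : Type*} [Field K] {x : K} (hx : x ≠ 0) (n : ℕ) :
    ∑ k ∈ Finset.range n, 1 / x ^ (k + 1) = (∑ k ∈ Finset.range n, x ^ k) / x ^ n := by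
  induction n with
  | zero => simp
  | succ n ih =>
    rw [Finset.sum_range_succ, ih, geom_sum_succ]
    field_simp
    ring

section LevelMap

variable {R : Type*} [CommRing R]

/-- The connecting map `D_r (a, b) = (a, -a + r * b)` of the inductive system on `R²`. -/
def connectingMap (r : R) (x : R × R) : R × R :=
  (x.1, -x.1 + r * x.2)

variable (K : Type*) [Field K] [Algebra R K]

/-- The map `F_n (a, b) = (a, b / r ^ n + a * ∑_{k=1}^n r⁻ᵏ)` from the `n`-th copy of `R²` in the
inductive system to `R × K`, where the localization `R[1/r]` is regarded as a subset of `K`.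
The sum is indexed from `0`. -/
def levelMap (r : R) (n : ℕ) (x : R × R) : R × K :=
  (x.1, algebraMap R K x.2 / algebraMap R K r ^ n +
    algebraMap R K x.1 * ∑ k ∈ Finset.range n, 1 / algebraMap R K r ^ (k + 1))

variable {K} {r : R}

theorem levelMap_apply_eq_div (hr : algebraMap R K r ≠ 0) (n : ℕ) (a b : R) :
    levelMap K r n (a, b) =
      (a, algebraMap R K (b + a * ∑ k ∈ Finset.range n, r ^ k) / algebraMap R K r ^ n) := by
  simp only [levelMap, sum_one_div_pow_succ hr, map_add, map_mul, map_sum, map_pow, add_div,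
    mul_div_assoc]

theorem levelMap_succ_connectingMap (hr : algebraMap R K r ≠ 0) (n : ℕ) (x : R × R) :
    levelMap K r (n + 1) (connectingMap r x) = levelMap K r n x := by
  obtain ⟨a, b⟩ := x
  have numerator_succ : -a + r * b + a * ∑ k ∈ Finset.range (n + 1), r ^ k =
      r * (b + a * ∑ k ∈ Finset.range n, r ^ k) := by
    rw [geom_sum_succ]
    ring
  rw [connectingMap, levelMap_apply_eq_div hr, levelMap_apply_eq_div hr, numerator_succ, map_mul,
    pow_succ', mul_div_mul_left _ _ hr]

theorem levelMap_injective [FaithfulSMul R K] (hr : algebraMap R K r ≠ 0) (n : ℕ) :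
    Function.Injective (levelMap K r n) := by
  rintro ⟨a, b⟩ ⟨a', b'⟩ h
  rw [levelMap_apply_eq_div hr, levelMap_apply_eq_div hr, Prod.mk.injEq] at h
  obtain ⟨rfl, h⟩ := h
  rw [div_left_inj' (pow_ne_zero n hr), (FaithfulSMul.algebraMap_injective R K).eq_iff,
    add_left_inj] at h
  rw [h]

theorem levelMap_apply_sub_mul_geom_sum (hr : algebraMap R K r ≠ 0) (n : ℕ) (a c : R) :
    levelMap K r n (a, c - a * ∑ k ∈ Finset.range n, r ^ k) =
      (a, algebraMap R K c / algebraMap R K r ^ n) := by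
  rw [levelMap_apply_eq_div hr, sub_add_cancel]

theorem stmt_8_general [FaithfulSMul R K] (hr : r ≠ 0) :
    (∀ n x, levelMap K r (n + 1) (connectingMap r x) = levelMap K r n x) ∧
    (∀ n, Function.Injective (levelMap K r n)) ∧
    (∀ (m : R) (q : K), (∃ c : R, ∃ k : ℕ, q = algebraMap R K c / algebraMap R K r ^ k) →
      ∃ n x, levelMap K r n x = (m, q)) := by
  have hr' : algebraMap R K r ≠ 0 :=
    (map_ne_zero_iff _ (FaithfulSMul.algebraMap_injective R K)).mpr hr
  refine ⟨levelMap_succ_connectingMap hr', levelMap_injective hr', ?_⟩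
  rintro m _ ⟨c, k, rfl⟩
  exact ⟨k, _, levelMap_apply_sub_mul_geom_sum hr' k m c⟩

end LevelMap

/-- With `s_n = ∑_{k=1}^n N^{-k}`, `F_n (a, b) = (a, b/N^n + a·s_n)`,
and `D_N (a, b) = (a, -a + N·b)`, the maps `F_n` are compatible with `D_N`,
injective, and jointly surjective onto `ℤ × ℤ[1/N]`. -/
theorem stmt_8 (N : ℕ) (hN : 2 ≤ N)
    (s : ℕ → ℚ) (hs : ∀ n, s n = ∑ k ∈ Finset.range n, (1 : ℚ) / (N : ℚ) ^ (k + 1))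
    (F : ℕ → ℤ × ℤ → ℤ × ℚ)
    (hF : ∀ n (a b : ℤ), F n (a, b) = (a, (b : ℚ) / (N : ℚ) ^ n + (a : ℚ) * s n))
    (D : ℤ × ℤ → ℤ × ℤ)
    (hD : ∀ a b : ℤ, D (a, b) = (a, -a + (N : ℤ) * b)) :
    (∀ n : ℕ, ∀ x : ℤ × ℤ, F (n + 1) (D x) = F n x) ∧
    (∀ n : ℕ, Function.Injective (F n)) ∧
    (∀ (m : ℤ) (q : ℚ), (∃ c : ℤ, ∃ k : ℕ, q = (c : ℚ) / (N : ℚ) ^ k) →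
      ∃ n : ℕ, ∃ x : ℤ × ℤ, F n x = (m, q)) := by
  obtain rfl : F = levelMap ℚ (N : ℤ) := by ext n x : 2; simp [hs, hF, levelMap]
  obtain rfl : D = connectingMap (N : ℤ) := funext fun x => hD x.1 x.2
  simpa using stmt_8_general (K := ℚ) (r := (N : ℤ)) (by lia)
end

section
/- Let N ≥ 2 be an integer and let θ_0 ∈ (0, 1) be irrational. Define recursively θ_{n+1} = θ_n / (N + θ_n), set s_n = Σ_{k=1}^{n} N^{−k} (with s_0 = 0), and define c_0 = 1 and c_{n+1} = c_n / (1 − θ_{n+1}). Then for every n ∈ ℕ: (i) θ_n ∈ (0, 1) and θ_n is irrational; (ii) c_n = 1 + θ_0·s_n; (iii) c_n·θ_n = θ_0 / N^n. Consequently c_n·(a + b·θ_n) = a + θ_0·(b/N^n + a·s_n) for all integers a, b. -/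
/-!
The idea is to follow the pair `(c_n, c_n θ_n)` instead of `θ_n` and `c_n` separately. Since
`1 - θ_{n+1} = N / (N + θ_n)`, the nonlinear recursion becomes linear in this pair:
`c_{n+1} = c_n + c_n θ_n / N` and `c_{n+1} θ_{n+1} = c_n θ_n / N`. Hence `c_n θ_n` is geometric
and `c_n` is its partial sum. Irrationality propagates because `t ↦ t / (N + t)` is a Möbius map
with rational coefficients and determinant `N ≠ 0`.
-/

section Field

variable {K : Type*} [Field K] {N : K}

theorem div_one_sub_div_add {t : K} (hN : N ≠ 0) (ht : N + t ≠ 0) (x : K) :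
    x / (1 - t / (N + t)) = x + x * t / N := by
  rw [one_sub_div ht, add_sub_cancel_right]
  field_simp

theorem div_one_sub_div_add_mul {t : K} (ht : N + t ≠ 0) (x : K) :
    x / (1 - t / (N + t)) * (t / (N + t)) = x * t / N := by
  rw [one_sub_div ht, add_sub_cancel_right]
  field_simp

variable {θ c : ℕ → K}

theorem normalization_mul_eq_div_pow (hθ : ∀ n, θ (n + 1) = θ n / (N + θ n))
    (hc : ∀ n, c (n + 1) = c n / (1 - θ (n + 1))) (hne : ∀ n, N + θ n ≠ 0) (n : ℕ) :
    c n * θ n = c 0 * θ 0 / N ^ n := by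
  induction n with
  | zero => rw [pow_zero, div_one]
  | succ n ih =>
    calc c (n + 1) * θ (n + 1)
        = c n * θ n / N := by rw [hc, hθ, div_one_sub_div_add_mul (hne n)]
      _ = c 0 * θ 0 / N ^ (n + 1) := by rw [ih, div_div, pow_succ]

theorem normalization_eq_add_mul_sum (hN : N ≠ 0) (hθ : ∀ n, θ (n + 1) = θ n / (N + θ n))
    (hc : ∀ n, c (n + 1) = c n / (1 - θ (n + 1))) (hne : ∀ n, N + θ n ≠ 0) (n : ℕ) :
    c n = c 0 + c 0 * θ 0 * ∑ k ∈ Finset.range n, 1 / N ^ (k + 1) := by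
  induction n with
  | zero => simp
  | succ n ih =>
    calc c (n + 1)
        = c n + c n * θ n / N := by rw [hc, hθ, div_one_sub_div_add hN (hne n)]
      _ = c n + c 0 * θ 0 * (1 / N ^ (n + 1)) := by
        rw [normalization_mul_eq_div_pow hθ hc hne, div_div, ← pow_succ, mul_one_div]
      _ = c 0 + c 0 * θ 0 * ∑ k ∈ Finset.range (n + 1), 1 / N ^ (k + 1) := by
        rw [Finset.sum_range_succ, mul_add, ← add_assoc, ← ih]

end Field

section OrderedField

variable {K : Type*} [Field K] [LinearOrder K] [IsStrictOrderedRing K] {N : K} {θ : ℕ → K}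

theorem pos_of_rec_div_add (hN : 0 < N) (hθ : ∀ n, θ (n + 1) = θ n / (N + θ n)) (h0 : 0 < θ 0)
    (n : ℕ) : 0 < θ n := by
  induction n with
  | zero => exact h0
  | succ n ih => rw [hθ]; positivity

theorem lt_one_of_rec_div_add (hN : 0 < N) (hθ : ∀ n, θ (n + 1) = θ n / (N + θ n))
    (h0 : 0 < θ 0) (h1 : θ 0 < 1) : ∀ n, θ n < 1
  | 0 => h1
  | n + 1 => by
    have hpos : 0 < θ n := pos_of_rec_div_add hN hθ h0 n
    rw [hθ, div_lt_one (add_pos hN hpos)]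
    exact lt_add_of_pos_left _ hN

end OrderedField

theorem irrational_div_ratCast_add {t : ℝ} (ht : Irrational t) {q : ℚ} (hq : q ≠ 0) :
    Irrational (t / (q + t)) := by
  have hinv : t / (q + t) = (q * t⁻¹ + 1)⁻¹ := by
    have ht0 : t ≠ 0 := ht.ne_zero
    field_simp
  rw [hinv]
  exact_mod_cast ((ht.inv.ratCast_mul hq).add_ratCast 1).inv

theorem irrational_of_rec_div_add {q : ℚ} (hq : q ≠ 0) {θ : ℕ → ℝ}
    (hθ : ∀ n, θ (n + 1) = θ n / (q + θ n)) (h0 : Irrational (θ 0)) (n : ℕ) :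
    Irrational (θ n) := by
  induction n with
  | zero => exact h0
  | succ n ih => rw [hθ]; exact irrational_div_ratCast_add ih hq

theorem stmt_9_general (N : ℚ) (hN : 0 < N)
    (θ : ℕ → ℝ) (hθ0 : 0 < θ 0) (hθ1 : θ 0 < 1) (hirr : Irrational (θ 0))
    (hrec : ∀ n : ℕ, θ (n + 1) = θ n / ((N : ℝ) + θ n))
    (s : ℕ → ℝ) (hs : ∀ n, s n = ∑ k ∈ Finset.range n, (1 : ℝ) / (N : ℝ) ^ (k + 1))
    (c : ℕ → ℝ) (hc0 : c 0 = 1) (hcrec : ∀ n : ℕ, c (n + 1) = c n / (1 - θ (n + 1))) :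
    (∀ n : ℕ, (0 < θ n ∧ θ n < 1) ∧ Irrational (θ n)) ∧
    (∀ n : ℕ, c n = 1 + θ 0 * s n) ∧
    (∀ n : ℕ, c n * θ n = θ 0 / (N : ℝ) ^ n) ∧
    (∀ n : ℕ, ∀ a b : ℝ, c n * (a + b * θ n) = a + θ 0 * (b / (N : ℝ) ^ n + a * s n)) := by
  have hNpos : (0 : ℝ) < N := Rat.cast_pos.mpr hN
  have hpos : ∀ n, 0 < θ n := pos_of_rec_div_add hNpos hrec hθ0
  have hne : ∀ n, (N : ℝ) + θ n ≠ 0 := fun n ↦ (add_pos hNpos (hpos n)).ne'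
  have hsum : ∀ n, c n = 1 + θ 0 * s n := fun n ↦ by
    rw [normalization_eq_add_mul_sum hNpos.ne' hrec hcrec hne, hc0, one_mul, ← hs]
  have hgeom : ∀ n, c n * θ n = θ 0 / (N : ℝ) ^ n := fun n ↦ by
    rw [normalization_mul_eq_div_pow hrec hcrec hne, hc0, one_mul]
  refine ⟨fun n ↦ ⟨⟨hpos n, lt_one_of_rec_div_add hNpos hrec hθ0 hθ1 n⟩,
    irrational_of_rec_div_add hN.ne' hrec hirr n⟩, hsum, hgeom, fun n a b ↦ ?_⟩
  calc c n * (a + b * θ n)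
      = a * c n + b * (c n * θ n) := by ring
    _ = a * (1 + θ 0 * s n) + b * (θ 0 / (N : ℝ) ^ n) := by rw [hgeom, hsum]
    _ = a + θ 0 * (b / (N : ℝ) ^ n + a * s n) := by ring

/-- For the recursion `θ_{n+1} = θ_n / (N + θ_n)` with `θ_0 ∈ (0,1)`
irrational, `s_n = ∑_{k=1}^n N^{-k}`, `c_0 = 1`, `c_{n+1} = c_n / (1 - θ_{n+1})`:
(i) each `θ_n` lies in `(0,1)` and is irrational; (ii) `c_n = 1 + θ_0·s_n`;
(iii) `c_n·θ_n = θ_0 / N^n`; consequently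
`c_n·(a + b·θ_n) = a + θ_0·(b/N^n + a·s_n)` for all integers `a, b`. -/
theorem stmt_9 (N : ℕ) (hN : 2 ≤ N)
    (θ : ℕ → ℝ) (hθ0 : 0 < θ 0) (hθ1 : θ 0 < 1) (hirr : Irrational (θ 0))
    (hrec : ∀ n : ℕ, θ (n + 1) = θ n / ((N : ℝ) + θ n))
    (s : ℕ → ℝ) (hs : ∀ n, s n = ∑ k ∈ Finset.range n, (1 : ℝ) / (N : ℝ) ^ (k + 1))
    (c : ℕ → ℝ) (hc0 : c 0 = 1) (hcrec : ∀ n : ℕ, c (n + 1) = c n / (1 - θ (n + 1))) :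
    (∀ n : ℕ, (0 < θ n ∧ θ n < 1) ∧ Irrational (θ n)) ∧
    (∀ n : ℕ, c n = 1 + θ 0 * s n) ∧
    (∀ n : ℕ, c n * θ n = θ 0 / (N : ℝ) ^ n) ∧
    (∀ n : ℕ, ∀ a b : ℤ,
      c n * ((a : ℝ) + (b : ℝ) * θ n)
        = (a : ℝ) + θ 0 * ((b : ℝ) / (N : ℝ) ^ n + (a : ℝ) * s n)) := by
  obtain ⟨hθ, hsum, hgeom, haffine⟩ := stmt_9_general N
    (Nat.cast_pos.mpr (zero_lt_two.trans_le hN)) θ hθ0 hθ1 hirr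
    (by simpa using hrec) s (by simpa using hs) c hc0 hcrec
  exact ⟨hθ, hsum, by simpa using hgeom, fun n a b ↦ by simpa using haffine n a b⟩
end

section
/- Let α, β, α', β' ∈ ℝ be such that the four real numbers 1, α, β, α·β are linearly independent over ℚ and the four real numbers 1, α', β', α'·β' are linearly independent over ℚ. Then the additive subgroup of ℝ generated by {1, α, β, α·β} equals the additive subgroup of ℝ generated by {1, α', β', α'·β'} if and only if there exists a 4×4 integer matrix G with det G ∈ {1, −1}, whose first column is (1, 0, 0, 0)ᵀ, such that the row-vector identity (1, α', β', α'·β')·G = (1, α, β, α·β) holds over ℝ. (This is the matrix form of the Elliott-invariant classification criterion for the four-dimensional infinitesimal-killing protori A_pro^{α,β}.) -/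
open Matrix

/-!
For tuples `v` and `w`, the columns of an integer matrix `G` with `v ᵥ* G = w` are coordinates of
the entries of `w` with respect to `v`, so such a `G` exists exactly when `w` lies in the group
generated by `v`. If `v` is independent, coordinates are unique; hence matrices expressing `v` and
`w` through each other are mutually inverse, and an entry shared by `v` and `w` forces a standard
unit column.
-/

section IntegerCombinations

variable {ι κ R : Type*} [Fintype ι] [Ring R] {v : ι → R} {w : κ → R}

lemma vecMul_map_intCast_apply (v : ι → R) (G : Matrix ι κ ℤ) (j : κ) :
    (v ᵥ* G.map (Int.cast : ℤ → R)) j = Fintype.linearCombination ℤ v (G.col j) := by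
  simp only [vecMul, dotProduct, map_apply, Fintype.linearCombination_apply, col_apply,
    zsmul_eq_mul, Int.cast_comm]

lemma mem_closure_range_iff_exists_linearCombination {M : Type*} [AddCommGroup M]
    {v : ι → M} {x : M} :
    x ∈ AddSubgroup.closure (Set.range v) ↔
      ∃ c : ι → ℤ, Fintype.linearCombination ℤ v c = x := by
  rw [← Submodule.span_int_eq_addSubgroupClosure, Submodule.mem_toAddSubgroup,
    ← Fintype.range_linearCombination, LinearMap.mem_range]

lemma closure_range_le_iff_exists_vecMul_eq :
    AddSubgroup.closure (Set.range w) ≤ AddSubgroup.closure (Set.range v) ↔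
      ∃ G : Matrix ι κ ℤ, v ᵥ* G.map (Int.cast : ℤ → R) = w := by
  simp only [AddSubgroup.closure_le, Set.range_subset_iff, SetLike.mem_coe,
    mem_closure_range_iff_exists_linearCombination, funext_iff, vecMul_map_intCast_apply]
  refine ⟨fun hw ↦ ?_, fun ⟨G, hG⟩ j ↦ ⟨G.col j, hG j⟩⟩
  choose c hc using hw
  exact ⟨(of c)ᵀ, hc⟩

lemma vecMul_map_intCast_injective (hv : LinearIndependent ℤ v) :
    Function.Injective fun G : Matrix ι κ ℤ ↦ v ᵥ* G.map (Int.cast : ℤ → R) := by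
  intro G H hGH
  refine ext_col fun j ↦ hv.fintypeLinearCombination_injective ?_
  simpa only [vecMul_map_intCast_apply] using congrFun hGH j

lemma col_eq_single_of_vecMul_eq [DecidableEq ι] (hv : LinearIndependent ℤ v)
    {G : Matrix ι κ ℤ} (hG : v ᵥ* G.map (Int.cast : ℤ → R) = w) {i : ι} {j : κ}
    (hij : w j = v i) : G.col j = Pi.single i 1 := by
  apply hv.fintypeLinearCombination_injective
  rw [← vecMul_map_intCast_apply, hG, hij, Fintype.linearCombination_apply_single, one_smul]

lemma isUnit_det_of_vecMul_eq [DecidableEq ι] {w : ι → R} (hv : LinearIndependent ℤ v)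
    {G H : Matrix ι ι ℤ} (hG : v ᵥ* G.map (Int.cast : ℤ → R) = w)
    (hH : w ᵥ* H.map (Int.cast : ℤ → R) = v) : IsUnit G.det := by
  have hGH : G * H = 1 := vecMul_map_intCast_injective hv <| by
    simp only [map_mul_intCast, ← vecMul_vecMul, hG, hH,
      Matrix.map_one _ Int.cast_zero Int.cast_one, vecMul_one]
  exact isUnit_det_of_right_inverse hGH

lemma vecMul_inv_eq_of_vecMul_eq [DecidableEq ι] {w : ι → R} {G : Matrix ι ι ℤ}
    (hdet : IsUnit G.det) (hG : v ᵥ* G.map (Int.cast : ℤ → R) = w) :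
    w ᵥ* G⁻¹.map (Int.cast : ℤ → R) = v := by
  rw [← hG, vecMul_vecMul, ← map_mul_intCast, mul_nonsing_inv _ hdet,
    Matrix.map_one _ Int.cast_zero Int.cast_one, vecMul_one]

theorem stmt_19_general [DecidableEq ι] {w : ι → R} (hv : LinearIndependent ℤ v) {i : ι}
    (hi : w i = v i) :
    AddSubgroup.closure (Set.range w) = AddSubgroup.closure (Set.range v) ↔
      ∃ G : Matrix ι ι ℤ, IsUnit G.det ∧ G.col i = Pi.single i 1 ∧
        v ᵥ* G.map (Int.cast : ℤ → R) = w := by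
  rw [le_antisymm_iff, closure_range_le_iff_exists_vecMul_eq, closure_range_le_iff_exists_vecMul_eq]
  constructor
  · rintro ⟨⟨G, hG⟩, ⟨H, hH⟩⟩
    exact ⟨G, isUnit_det_of_vecMul_eq hv hG hH, col_eq_single_of_vecMul_eq hv hG hi, hG⟩
  · rintro ⟨G, hdet, -, hG⟩
    exact ⟨⟨G, hG⟩, ⟨G⁻¹, vecMul_inv_eq_of_vecMul_eq hdet hG⟩⟩

end IntegerCombinations

/-- If `1, α, β, αβ` and `1, α', β', α'β'` are each linearly
independent over `ℚ`, then the additive subgroups of `ℝ` they generate coincide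
iff there is an integer matrix `G` with `det G = ±1`, first column
`(1,0,0,0)ᵀ`, and `(1, α', β', α'β')·G = (1, α, β, αβ)` as real row vectors. -/
theorem stmt_19 (α β α' β' : ℝ)
    (h : LinearIndependent ℚ ![(1 : ℝ), α, β, α * β])
    (h' : LinearIndependent ℚ ![(1 : ℝ), α', β', α' * β']) :
    AddSubgroup.closure {(1 : ℝ), α, β, α * β}
      = AddSubgroup.closure {(1 : ℝ), α', β', α' * β'} ↔
    ∃ G : Matrix (Fin 4) (Fin 4) ℤ,
      (G.det = 1 ∨ G.det = -1) ∧
      (G 0 0 = 1 ∧ G 1 0 = 0 ∧ G 2 0 = 0 ∧ G 3 0 = 0) ∧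
      Matrix.vecMul ![(1 : ℝ), α', β', α' * β'] (G.map (Int.cast : ℤ → ℝ))
        = ![(1 : ℝ), α, β, α * β] := by
  simpa [range_cons, Set.insert_eq, -Set.union_singleton, -Set.singleton_union, Set.union_assoc,
    Int.isUnit_iff, funext_iff, Fin.forall_fin_succ] using
    stmt_19_general (w := ![1, α, β, α * β]) (i := 0) (h'.restrict_scalars' ℤ) rfl
end
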